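/- Let 𝔥 be a complex Hilbert space which is not of dimension two and let d be a completely additive decoherence functional for 𝔥. Then there exists a trace class operator 𝔛 on 𝔥 ⊗ 𝔥 such that d(p,q) = tr((p ⊗ q)𝔛) for ALL projections p,q on 𝔥 if, and only if, d is tensor bounded. -/

import Mathlib

/- Common background definitions: decoherence functionals on the projection
lattice of a complex Hilbert space, boundedness/additivity notions, trace class
operators, and an axiomatisation of the Hilbert space tensor product
`𝔥 ⊗ 𝔥` together with the operator tensor product. -/

noncomputable section

open scoped ComplexInnerProductSpace ComplexOrder
open ContinuousLinearMap

universe u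

variable {E : Type u} [NormedAddCommGroup E] [InnerProductSpace ℂ E] [CompleteSpace E]
variable {G : Type u} [NormedAddCommGroup G] [InnerProductSpace ℂ G] [CompleteSpace G]

/-- `p` is an orthogonal projection on a Hilbert space. -/
def IsOrthoProj (p : E →L[ℂ] E) : Prop :=
  IsIdempotentElem p ∧ IsSelfAdjoint p

/-- `p` is an operator of finite rank. -/
def HasFiniteRank (p : E →L[ℂ] E) : Prop :=
  FiniteDimensional ℂ ↥(LinearMap.range (p : E →ₗ[ℂ] E))

/-- A decoherence functional on the lattice of projections `P(𝔥)`
(modelled as a function on all pairs of bounded operators whose defining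
properties refer only to its values at pairs of orthogonal projections). -/
structure IsDecoherenceFunctional (d : (E →L[ℂ] E) → (E →L[ℂ] E) → ℂ) : Prop where
  hermitian : ∀ p q, IsOrthoProj p → IsOrthoProj q → d p q = starRingEnd ℂ (d q p)
  pos : ∀ p, IsOrthoProj p → 0 ≤ d p p
  normalized : d 1 1 = 1
  orthoadd : ∀ p₁ p₂ q, IsOrthoProj p₁ → IsOrthoProj p₂ → IsOrthoProj q →
    p₁ * p₂ = 0 → d (p₁ + p₂) q = d p₁ q + d p₂ q

/-- A decoherence functional is bounded if `{|d(p,q)|}` is a bounded set. -/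
def DFBounded (d : (E →L[ℂ] E) → (E →L[ℂ] E) → ℂ) : Prop :=
  ∃ C : ℝ, ∀ p q, IsOrthoProj p → IsOrthoProj q → ‖d p q‖ ≤ C

/-- Countable additivity of a decoherence functional: for every countable
pairwise orthogonal family of projections summing (strongly) to `P`,
`d (P, q) = ∑ d (pᵢ, q)`. -/
def DFCountablyAdditive (d : (E →L[ℂ] E) → (E →L[ℂ] E) → ℂ) : Prop :=
  ∀ (p : ℕ → E →L[ℂ] E) (P q : E →L[ℂ] E),
    (∀ i, IsOrthoProj (p i)) → IsOrthoProj P → IsOrthoProj q →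
    (∀ i j, i ≠ j → p i * p j = 0) →
    (∀ x : E, HasSum (fun i => p i x) (P x)) →
    HasSum (fun i => d (p i) q) (d P q)

/-- Complete additivity of a decoherence functional. -/
def DFCompletelyAdditive (d : (E →L[ℂ] E) → (E →L[ℂ] E) → ℂ) : Prop :=
  ∀ (ι : Type u) (p : ι → E →L[ℂ] E) (P q : E →L[ℂ] E),
    (∀ i, IsOrthoProj (p i)) → IsOrthoProj P → IsOrthoProj q →
    (∀ i j, i ≠ j → p i * p j = 0) →
    (∀ x : E, HasSum (fun i => p i x) (P x)) →
    HasSum (fun i => d (p i) q) (d P q)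

/-- A bilinear form `D` on `B(𝔥) × B(𝔥)` is bounded. -/
def IsBoundedBilinear (D : (E →L[ℂ] E) →ₗ[ℂ] (E →L[ℂ] E) →ₗ[ℂ] ℂ) : Prop :=
  ∃ C : ℝ, ∀ x y : E →L[ℂ] E, ‖D x y‖ ≤ C * ‖x‖ * ‖y‖

/-- The bilinear form `D` extends the decoherence functional `d`. -/
def ExtendsDF (D : (E →L[ℂ] E) →ₗ[ℂ] (E →L[ℂ] E) →ₗ[ℂ] ℂ)
    (d : (E →L[ℂ] E) → (E →L[ℂ] E) → ℂ) : Prop :=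
  ∀ p q, IsOrthoProj p → IsOrthoProj q → D p q = d p q

/-- `T` is a trace class operator (via the standard characterisation: the sums
`∑ |⟪eᵢ, T fᵢ⟫|` over finite orthonormal families are uniformly bounded). -/
def IsTraceClass (T : E →L[ℂ] E) : Prop :=
  ∃ C : ℝ, ∀ (n : ℕ) (e f : Fin n → E), Orthonormal ℂ e → Orthonormal ℂ f →
    ∑ i, ‖⟪e i, T (f i)⟫‖ ≤ C

/-- The trace of an operator computed in the Hilbert basis `b` (for a trace
class operator this is basis independent and is the usual trace). -/
def traceAlong {ι : Type*} (b : HilbertBasis ι ℂ E) (T : E →L[ℂ] E) : ℂ :=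
  ∑' i, ⟪b i, T (b i)⟫

/-- The rank one orthogonal projection `p_ξ` onto the span of a unit vector `ξ`. -/
def rankOneProj (ξ : E) : E →L[ℂ] E :=
  (innerSL ℂ ξ).smulRight ξ

/-- An axiomatisation of the Hilbert space tensor product `G = E ⊗ E`:
a bilinear map `tmul` into `G` multiplying inner products and having dense span. -/
structure HilbertTensorProduct (E G : Type u) [NormedAddCommGroup E]
    [InnerProductSpace ℂ E] [NormedAddCommGroup G] [InnerProductSpace ℂ G] :
    Type u where
  tmul : E →ₗ[ℂ] E →ₗ[ℂ] G
  inner_tmul : ∀ a b c d : E, ⟪tmul a b, tmul c d⟫ = ⟪a, c⟫ * ⟪b, d⟫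
  dense_span : Dense (↑(Submodule.span ℂ (Set.range fun z : E × E => tmul z.1 z.2)) : Set G)

/-- The algebraic tensor product `E ⊗_alg E`, viewed as a (dense) subspace of `G`. -/
def HilbertTensorProduct.algSpan (J : HilbertTensorProduct E G) : Submodule ℂ G :=
  Submodule.span ℂ (Set.range fun z : E × E => J.tmul z.1 z.2)

/-- The Hilbert space tensor product together with the operator tensor product
`(x, y) ↦ x ⊗ y` on bounded operators. -/
structure OperatorTensor (E G : Type u) [NormedAddCommGroup E]
    [InnerProductSpace ℂ E] [NormedAddCommGroup G] [InnerProductSpace ℂ G]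
    extends HilbertTensorProduct E G where
  op : (E →L[ℂ] E) → (E →L[ℂ] E) → (G →L[ℂ] G)
  op_tmul : ∀ (x y : E →L[ℂ] E) (a b : E), op x y (tmul a b) = tmul (x a) (y b)

/-- The algebraic tensor product `K(𝔥) • K(𝔥)`: the span in `B(G)` of the
operators `x ⊗ y` with `x, y` compact. -/
def OperatorTensor.compactSpan (J : OperatorTensor E G) : Submodule ℂ (G →L[ℂ] G) :=
  Submodule.span ℂ {T | ∃ x y : E →L[ℂ] E,
    IsCompactOperator (⇑x) ∧ IsCompactOperator (⇑y) ∧ T = J.op x y}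

/-- `β` is the linear functional on `K(𝔥) • K(𝔥)` induced by the bilinear form
`D`, i.e. `β (x ⊗ y) = D (x, y)` for compact `x, y`. -/
def IsBetaFor (J : OperatorTensor E G)
    (D : (E →L[ℂ] E) →ₗ[ℂ] (E →L[ℂ] E) →ₗ[ℂ] ℂ)
    (β : ↥J.compactSpan →ₗ[ℂ] ℂ) : Prop :=
  ∀ x y : E →L[ℂ] E, IsCompactOperator (⇑x) → IsCompactOperator (⇑y) →
    ∀ hm : J.op x y ∈ J.compactSpan, β ⟨J.op x y, hm⟩ = D x y

/-- `β` is bounded for the operator norm (inherited from `B(G)`). -/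
def BetaNormBounded (J : OperatorTensor E G) (β : ↥J.compactSpan →ₗ[ℂ] ℂ) : Prop :=
  ∃ C : ℝ, ∀ S : J.compactSpan, ‖β S‖ ≤ C * ‖(S : G →L[ℂ] G)‖

/-- A decoherence functional is tensor bounded if its associated functional `β`
on `K(𝔥) • K(𝔥)` is bounded for the (pre-)C*-norm. -/
def IsTensorBounded (J : OperatorTensor E G)
    (d : (E →L[ℂ] E) → (E →L[ℂ] E) → ℂ) : Prop :=
  ∃ D, IsBoundedBilinear D ∧ ExtendsDF D d ∧
    ∃ β, IsBetaFor J D β ∧ BetaNormBounded J β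

/-- `β` is uniformly bounded on the projections `p_ξ`, `ξ` a unit vector of the
algebraic tensor product `𝔥 ⊗_alg 𝔥`. -/
def BetaTraciallyBounded (J : OperatorTensor E G) (β : ↥J.compactSpan →ₗ[ℂ] ℂ) : Prop :=
  ∃ C : ℝ, ∀ ξ : G, ξ ∈ J.toHilbertTensorProduct.algSpan → ‖ξ‖ = 1 →
    ∀ hm : rankOneProj ξ ∈ J.compactSpan, ‖β ⟨rankOneProj ξ, hm⟩‖ ≤ C

/-- A decoherence functional is tracially bounded if it is bounded and its
associated functional `β` is uniformly bounded on rank one projections `p_ξ`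
with `ξ` a unit vector in `𝔥 ⊗_alg 𝔥`. -/
def IsTraciallyBounded (J : OperatorTensor E G)
    (d : (E →L[ℂ] E) → (E →L[ℂ] E) → ℂ) : Prop :=
  DFBounded d ∧ ∃ D, IsBoundedBilinear D ∧ ExtendsDF D d ∧
    ∃ β, IsBetaFor J D β ∧ BetaTraciallyBounded J β

/-- Quantitative version of `IsTraceClass`. -/
def TCB {H : Type*} [NormedAddCommGroup H] [InnerProductSpace ℂ H] (C : ℝ) (T : H →L[ℂ] H) : Prop :=
  ∀ (n : ℕ) (e f : Fin n → H), Orthonormal ℂ e → Orthonormal ℂ f →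
    ∑ i, ‖⟪e i, T (f i)⟫‖ ≤ C

section TraceLemmas

variable {H : Type*} [NormedAddCommGroup H] [InnerProductSpace ℂ H] [CompleteSpace H]
variable {K : Type*} [NormedAddCommGroup K] [InnerProductSpace ℂ K] [CompleteSpace K]

lemma partial_isom_norm_le {n : ℕ} (e f : Fin n → H) (he : Orthonormal ℂ e) (hf : Orthonormal ℂ f)
    (θ : Fin n → ℂ) (hθ : ∀ i, ‖θ i‖ ≤ 1) :
    ‖∑ i, θ i • InnerProductSpace.rankOne ℂ (f i) (e i)‖ ≤ 1 := by
  refine ContinuousLinearMap.opNorm_le_bound _ zero_le_one fun x => ?_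
  have h1 : (∑ i, θ i • InnerProductSpace.rankOne ℂ (f i) (e i)) x
      = ∑ i, (θ i * ⟪e i, x⟫) • f i := by
    simp [ContinuousLinearMap.sum_apply, smul_smul]
  rw [h1, one_mul]
  refine le_of_sq_le_sq ?_ (norm_nonneg x)
  have h2 : ‖∑ i, (θ i * ⟪e i, x⟫) • f i‖ ^ 2 = ∑ i, ‖θ i * ⟪e i, x⟫‖ ^ 2 := by
    have := hf.inner_sum (fun i => θ i * ⟪e i, x⟫) (fun i => θ i * ⟪e i, x⟫) Finset.univ
    have h3 := congrArg Complex.re this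
    rw [inner_self_eq_norm_sq_to_K] at h3
    have h4 : ∀ z : ℂ, (starRingEnd ℂ) z * z = ((‖z‖ ^ 2 : ℝ) : ℂ) := fun z => by
      rw [Complex.conj_mul']; push_cast; rfl
    simp only [h4] at h3
    rw [← Complex.ofReal_sum, Complex.ofReal_re] at h3
    rw [← h3]
    norm_cast
  rw [h2]
  refine le_trans (Finset.sum_le_sum fun i _ => ?_)
    (he.sum_inner_products_le (s := Finset.univ) (x := x))
  rw [norm_mul]
  gcongr
  exact mul_le_of_le_one_left (norm_nonneg _) (hθ i)

lemma tcb_sum_le {C : ℝ} {Y : H →L[ℂ] H} (hY : TCB C Y) {ι : Type*} (b : HilbertBasis ι ℂ H)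
    (T : H →L[ℂ] H) (s : Finset ι) :
    ∑ k ∈ s, ‖⟪b k, (T * Y) (b k)⟫‖ ≤ 2 * C * ‖T‖ := by
  have hC : 0 ≤ C := by simpa using hY 0 ![] ![] (by simp [Orthonormal]) (by simp [Orthonormal])
  have hU : ∀ u : unitary (H →L[ℂ] H),
      ∑ k ∈ s, ‖⟪b k, ((u : H →L[ℂ] H) * Y) (b k)⟫‖ ≤ C := by
    intro u
    have hb : Orthonormal ℂ (fun i : Fin s.card => b (s.equivFin.symm i)) :=
      b.orthonormal.comp _ (Subtype.val_injective.comp s.equivFin.symm.injective)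
    have hub : Orthonormal ℂ (fun i : Fin s.card =>
        (star (u : H →L[ℂ] H)) (b (s.equivFin.symm i))) := by
      rw [orthonormal_iff_ite] at hb ⊢
      intro i j
      rw [← hb i j, ContinuousLinearMap.star_eq_adjoint, ContinuousLinearMap.adjoint_inner_left,
        ← ContinuousLinearMap.star_eq_adjoint, ← ContinuousLinearMap.mul_apply,
        Unitary.mul_star_self_of_mem u.2, ContinuousLinearMap.one_apply]
    have := hY _ _ _ hub hb
    rw [← Finset.sum_coe_sort, ← s.equivFin.symm.sum_comp]
    refine le_trans (le_of_eq (Finset.sum_congr rfl fun i _ => ?_)) this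
    rw [ContinuousLinearMap.star_eq_adjoint, ContinuousLinearMap.adjoint_inner_left]
    rfl
  obtain ⟨u, c, hT, hc⟩ := CStarAlgebra.exists_sum_four_unitary T
  calc ∑ k ∈ s, ‖⟪b k, (T * Y) (b k)⟫‖
      ≤ ∑ k ∈ s, ∑ i, ‖c i‖ * ‖⟪b k, ((u i : H →L[ℂ] H) * Y) (b k)⟫‖ := by
        refine Finset.sum_le_sum fun k _ => ?_
        conv_lhs => rw [hT]
        simp only [Finset.sum_mul, ContinuousLinearMap.sum_apply, inner_sum]
        refine (norm_sum_le _ _).trans (Finset.sum_le_sum fun i _ => le_of_eq ?_)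
        rw [smul_mul_assoc, ContinuousLinearMap.smul_apply, inner_smul_right, norm_mul]
    _ = ∑ i, ‖c i‖ * ∑ k ∈ s, ‖⟪b k, ((u i : H →L[ℂ] H) * Y) (b k)⟫‖ := by
        rw [Finset.sum_comm]; simp only [Finset.mul_sum]
    _ ≤ ∑ i : Fin 4, ‖T‖ / 2 * C := by
        refine Finset.sum_le_sum fun i _ => ?_
        exact mul_le_mul (hc i) (hU (u i)) (Finset.sum_nonneg fun _ _ => norm_nonneg _)
          (by positivity)
    _ = 2 * C * ‖T‖ := by simp; ring

lemma tcb_summable {C : ℝ} {Y : H →L[ℂ] H} (hY : TCB C Y) {ι : Type*} (b : HilbertBasis ι ℂ H)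
    (T : H →L[ℂ] H) : Summable fun k => ⟪b k, (T * Y) (b k)⟫ :=
  Summable.of_norm (summable_of_sum_le (fun _ => norm_nonneg _) (tcb_sum_le hY b T))

lemma tcb_trace_le {C : ℝ} {Y : H →L[ℂ] H} (hY : TCB C Y) {ι : Type*} (b : HilbertBasis ι ℂ H)
    (T : H →L[ℂ] H) : ‖traceAlong b (T * Y)‖ ≤ 2 * C * ‖T‖ := by
  have hs := summable_of_sum_le (fun _ => norm_nonneg _) (tcb_sum_le hY b T)
  exact (norm_tsum_le_tsum_norm hs).trans (hs.tsum_le_of_sum_le (tcb_sum_le hY b T))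

lemma hasSum_rankOne {ι : Type*} (b : HilbertBasis ι ℂ H) (η ξ : H) :
    HasSum (fun k => ⟪b k, InnerProductSpace.rankOne ℂ η ξ (b k)⟫) ⟪ξ, η⟫ := by
  have := b.hasSum_inner_mul_inner ξ η
  refine this.congr_fun fun k => ?_
  simp [inner_smul_right]

lemma rankOne_mul' (Y : H →L[ℂ] H) (η ξ : H) :
    InnerProductSpace.rankOne ℂ η ξ * Y = InnerProductSpace.rankOne ℂ η (adjoint Y ξ) := by
  ext x
  simp [ContinuousLinearMap.adjoint_inner_left]

lemma trace_rankOne_mul {ι : Type*} (b : HilbertBasis ι ℂ H) (Y : H →L[ℂ] H) (η ξ : H) :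
    HasSum (fun k => ⟪b k, (InnerProductSpace.rankOne ℂ η ξ * Y) (b k)⟫) ⟪ξ, Y η⟫ := by
  rw [rankOne_mul', ← ContinuousLinearMap.adjoint_inner_left]
  exact hasSum_rankOne b _ _

lemma exists_phase (z : ℂ) : ∃ θ : ℂ, ‖θ‖ ≤ 1 ∧ θ * z = ((‖z‖ : ℝ) : ℂ) := by
  by_cases h : z = 0
  · exact ⟨0, by simp, by simp [h]⟩
  · refine ⟨(starRingEnd ℂ) z / ‖z‖, ?_, ?_⟩
    · simp [h]
    · have : (‖z‖ : ℂ) ≠ 0 := by simpa using h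
      rw [div_mul_eq_mul_div, Complex.conj_mul']
      field_simp

lemma tcb_conj {C : ℝ} {Y : K →L[ℂ] K} (hY : TCB C Y) (A : K →L[ℂ] H) (B : H →L[ℂ] K)
    (hA : ‖A‖ ≤ 1) (hB : ‖B‖ ≤ 1) : TCB (2 * C) (A ∘L Y ∘L B) := by
  have hC : 0 ≤ C := by simpa using hY 0 ![] ![] (by simp [Orthonormal]) (by simp [Orthonormal])
  intro n e f he hf
  obtain ⟨w, b, -⟩ := exists_hilbertBasis ℂ K
  choose θ hθ hθ' using fun i => exists_phase ⟪e i, (A ∘L Y ∘L B) (f i)⟫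
  set V := ∑ i, θ i • InnerProductSpace.rankOne ℂ (f i) (e i) with hV
  have hVn : ‖V‖ ≤ 1 := partial_isom_norm_le e f he hf θ hθ
  have h1 : B ∘L V ∘L A =
      ∑ i, θ i • InnerProductSpace.rankOne ℂ (B (f i)) (adjoint A (e i)) := by
    ext x
    simp [hV, ContinuousLinearMap.sum_apply, ContinuousLinearMap.adjoint_inner_left]
  have h2 : HasSum (fun k => ⟪b k, ((B ∘L V ∘L A) * Y) (b k)⟫)
      (∑ i, θ i * ⟪e i, (A ∘L Y ∘L B) (f i)⟫) := by
    have := hasSum_sum (s := Finset.univ) fun i _ =>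
      (trace_rankOne_mul b Y (B (f i)) (adjoint A (e i))).mul_left (θ i)
    simp only [ContinuousLinearMap.adjoint_inner_left A] at this
    refine this.congr_fun fun k => ?_
    rw [h1, Finset.sum_mul, ContinuousLinearMap.sum_apply, inner_sum]
    refine Finset.sum_congr rfl fun i _ => ?_
    rw [smul_mul_assoc, ContinuousLinearMap.smul_apply, inner_smul_right]
  have h3 := tcb_trace_le hY b (B ∘L V ∘L A)
  rw [traceAlong, h2.tsum_eq] at h3
  simp only [hθ'] at h3
  rw [← Complex.ofReal_sum, Complex.norm_of_nonneg (Finset.sum_nonneg fun _ _ => norm_nonneg _)]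
    at h3
  refine h3.trans ?_
  have h4 : ‖B ∘L V ∘L A‖ ≤ 1 := by
    calc _ ≤ ‖B‖ * (‖V‖ * ‖A‖) := (opNorm_comp_le _ _).trans
            (mul_le_mul_of_nonneg_left (opNorm_comp_le _ _) (norm_nonneg _))
      _ ≤ 1 * (1 * 1) := by gcongr
      _ = 1 := by norm_num
  nlinarith

lemma tcb_approx {C : ℝ} {Y : H →L[ℂ] H} (hY : TCB C Y) {ε : ℝ} (hε : 0 < ε) :
    ∃ F Z : H →L[ℂ] H, Y = F + Z ∧ TCB (2 * ε) Z ∧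
      F ∈ Submodule.span ℂ
        (Set.range fun z : H × H => InnerProductSpace.rankOne ℂ z.1 z.2) := by
  let S : Set ℝ := {r | ∃ (n : ℕ) (e f : Fin n → H), Orthonormal ℂ e ∧ Orthonormal ℂ f ∧
    r = ∑ i, ‖⟪e i, Y (f i)⟫‖}
  have hSne : S.Nonempty := ⟨_, 0, ![], ![], by simp [Orthonormal], by simp [Orthonormal], rfl⟩
  have hSb : BddAbove S := by
    refine ⟨C, ?_⟩
    rintro r ⟨n, e, f, he, hf, rfl⟩
    exact hY n e f he hf
  obtain ⟨r, ⟨n, e, f, he, hf, rfl⟩, hr⟩ := exists_lt_of_lt_csSup hSne (sub_lt_self (sSup S) hε)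
  let M : Submodule ℂ H := Submodule.span ℂ (Set.range e ∪ Set.range f)
  have hMfin : FiniteDimensional ℂ M :=
    FiniteDimensional.span_of_finite ℂ ((Set.finite_range e).union (Set.finite_range f))
  have heM : ∀ i, e i ∈ M := fun i => Submodule.subset_span (Or.inl ⟨i, rfl⟩)
  have hfM : ∀ i, f i ∈ M := fun i => Submodule.subset_span (Or.inr ⟨i, rfl⟩)
  have app : ∀ (g : Fin n → H) (m : ℕ) (g' : Fin m → Mᗮ), Orthonormal ℂ g → Orthonormal ℂ g' →
      (∀ i, g i ∈ M) → Orthonormal ℂ (Fin.append g (fun i => (g' i : H))) := by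
    intro g m g' hg hg' hgM
    rw [orthonormal_iff_ite] at hg hg' ⊢
    intro i j
    have hx : ∀ i j, ⟪g i, (g' j : H)⟫ = 0 := fun i j =>
      Submodule.inner_right_of_mem_orthogonal (hgM i) (g' j).2
    have hx' : ∀ i j, ⟪(g' j : H), g i⟫ = 0 := fun i j =>
      Submodule.inner_left_of_mem_orthogonal (hgM i) (g' j).2
    refine Fin.addCases (fun i => ?_) (fun i => ?_) i <;>
      refine Fin.addCases (fun j => ?_) (fun j => ?_) j
    · simp [hg i j]
    · have : Fin.castAdd m i ≠ Fin.natAdd n j := by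
        simp only [ne_eq, Fin.ext_iff, Fin.val_castAdd, Fin.val_natAdd]; omega
      simp [hx i j, this]
    · have : Fin.natAdd n i ≠ Fin.castAdd m j := by
        simp only [ne_eq, Fin.ext_iff, Fin.val_castAdd, Fin.val_natAdd]; omega
      simp [hx' j i, this]
    · have := hg' i j
      rw [Submodule.coe_inner] at this
      simp [this]
  let YK : Mᗮ →L[ℂ] Mᗮ := (Mᗮ.orthogonalProjection) ∘L Y ∘L Mᗮ.subtypeL
  have hYK : TCB ε YK := by
    intro m e' f' he' hf'
    have h1 : ∑ i, ‖⟪Fin.append e (fun i => (e' i : H)) i,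
        Y (Fin.append f (fun i => (f' i : H)) i)⟫‖ ≤ sSup S :=
      le_csSup hSb ⟨_, _, _, app e m e' he he' heM, app f m f' hf hf' hfM, rfl⟩
    rw [Fin.sum_univ_add] at h1
    simp only [Fin.append_left, Fin.append_right] at h1
    have h2 : ∀ i, ⟪e' i, YK (f' i)⟫ = ⟪(e' i : H), Y (f' i)⟫ := fun i => by
      simp [YK]
    simp only [h2]
    linarith
  let P : H →L[ℂ] H := M.starProjection
  let Q : H →L[ℂ] H := Mᗮ.starProjection
  have hPQ : ∀ x, P x + Q x = x := fun x => by simp [P, Q]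
  let Z : H →L[ℂ] H := Mᗮ.subtypeL ∘L YK ∘L Mᗮ.orthogonalProjection
  have hZ : ∀ x, Z x = Q (Y (Q x)) := fun x => rfl
  refine ⟨Y - Z, Z, by simp, tcb_conj hYK _ _ (Submodule.norm_subtypeL_le _)
    (Submodule.orthogonalProjection_norm_le _), ?_⟩
  let b := stdOrthonormalBasis ℂ M
  have hP : ∀ x, P x = ∑ j, ⟪(b j : H), x⟫ • (b j : H) := by
    intro x
    have h := congrArg (fun z : M => (z : H)) (b.sum_repr' (M.orthogonalProjection x))
    simp only [Submodule.coe_sum, Submodule.coe_smul] at h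
    rw [show P x = ((M.orthogonalProjection x : M) : H) from rfl, ← h]
    refine Finset.sum_congr rfl fun j _ => ?_
    simp
  have hF : Y - Z = ∑ j, InnerProductSpace.rankOne ℂ (b j : H) (adjoint Y (b j : H))
      + ∑ j, InnerProductSpace.rankOne ℂ (Q (Y (b j : H))) (b j : H) := by
    ext x
    have h1 : (∑ j, InnerProductSpace.rankOne ℂ (b j : H) (adjoint Y (b j : H))) x = P (Y x) := by
      simp [hP, ContinuousLinearMap.sum_apply, ContinuousLinearMap.adjoint_inner_left]
    have h2 : (∑ j, InnerProductSpace.rankOne ℂ (Q (Y (b j : H))) (b j : H)) x = Q (Y (P x)) := by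
      simp [hP, ContinuousLinearMap.sum_apply, map_sum]
    rw [ContinuousLinearMap.add_apply, h1, h2, ContinuousLinearMap.sub_apply, hZ]
    have h3 : Q (Y x) = Q (Y (P x)) + Q (Y (Q x)) := by
      rw [← map_add, ← map_add, hPQ]
    rw [sub_eq_iff_eq_add, add_assoc, ← h3, hPQ]
  rw [hF]
  exact add_mem (sum_mem fun j _ => Submodule.subset_span ⟨(_, _), rfl⟩)
    (sum_mem fun j _ => Submodule.subset_span ⟨(_, _), rfl⟩)

lemma trace_normal {C : ℝ} {Y : H →L[ℂ] H} (hY : TCB C Y) {ι : Type*} (b : HilbertBasis ι ℂ H)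
    {α : Type*} {l : Filter α} (T : α → H →L[ℂ] H) (T₀ : H →L[ℂ] H)
    (hT : ∀ s, ‖T s‖ ≤ 1) (hT₀ : ‖T₀‖ ≤ 1)
    (hlim : ∀ x, Filter.Tendsto (fun s => T s x) l (nhds (T₀ x))) :
    Filter.Tendsto (fun s => traceAlong b (T s * Y)) l (nhds (traceAlong b (T₀ * Y))) := by
  have key : ∀ F ∈ Submodule.span ℂ
        (Set.range fun z : H × H => InnerProductSpace.rankOne ℂ z.1 z.2),
      (∀ R : H →L[ℂ] H, Summable fun k => ⟪b k, (R * F) (b k)⟫) ∧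
      Filter.Tendsto (fun s => traceAlong b (T s * F)) l (nhds (traceAlong b (T₀ * F))) := by
    intro F hF
    induction hF using Submodule.span_induction with
    | mem F h =>
      obtain ⟨⟨η, ξ⟩, rfl⟩ := h
      have h1 : ∀ R : H →L[ℂ] H,
          HasSum (fun k => ⟪b k, (R * InnerProductSpace.rankOne ℂ η ξ) (b k)⟫) ⟪ξ, R η⟫ := by
        intro R
        rw [ContinuousLinearMap.mul_def, InnerProductSpace.comp_rankOne]
        exact hasSum_rankOne b _ _
      refine ⟨fun R => (h1 R).summable, ?_⟩
      simp only [traceAlong, (h1 _).tsum_eq]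
      exact tendsto_const_nhds.inner (hlim η)
    | zero => simpa [traceAlong, summable_zero] using tendsto_const_nhds
    | add F G _ _ hF hG =>
      have h0 : ∀ (R : H →L[ℂ] H) k, ⟪b k, (R * (F + G)) (b k)⟫
          = ⟪b k, (R * F) (b k)⟫ + ⟪b k, (R * G) (b k)⟫ := fun R k => by
        rw [mul_add, ContinuousLinearMap.add_apply, inner_add_right]
      have h1 : ∀ R : H →L[ℂ] H, traceAlong b (R * (F + G))
          = traceAlong b (R * F) + traceAlong b (R * G) := fun R => by
        simp only [traceAlong, h0]
        exact (hF.1 R).tsum_add (hG.1 R)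
      refine ⟨fun R => ?_, ?_⟩
      · simp only [h0]; exact (hF.1 R).add (hG.1 R)
      · simp only [h1]; exact hF.2.add hG.2
    | smul c F _ hF =>
      have h0 : ∀ (R : H →L[ℂ] H) k, ⟪b k, (R * (c • F)) (b k)⟫
          = c * ⟪b k, (R * F) (b k)⟫ := fun R k => by
        rw [mul_smul_comm, ContinuousLinearMap.smul_apply, inner_smul_right]
      have h1 : ∀ R : H →L[ℂ] H, traceAlong b (R * (c • F))
          = c * traceAlong b (R * F) := fun R => by
        simp only [traceAlong, h0]
        exact tsum_mul_left
      refine ⟨fun R => ?_, ?_⟩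
      · simp only [h0]; exact (hF.1 R).mul_left c
      · simp only [h1]; exact hF.2.const_mul c
  rw [Metric.tendsto_nhds]
  intro ε hε
  obtain ⟨F, Z, rfl, hZ, hF⟩ := tcb_approx hY (ε := ε / 16) (by positivity)
  obtain ⟨hs, ht⟩ := key F hF
  have hadd : ∀ R : H →L[ℂ] H, traceAlong b (R * (F + Z))
      = traceAlong b (R * F) + traceAlong b (R * Z) := fun R => by
    simp only [traceAlong, mul_add, ContinuousLinearMap.add_apply, inner_add_right]
    exact (hs R).tsum_add (tcb_summable hZ b R)
  filter_upwards [Metric.tendsto_nhds.1 ht (ε / 4) (by positivity)] with s h1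
  rw [hadd, hadd, dist_eq_norm]
  rw [dist_eq_norm] at h1
  have h2 := tcb_trace_le hZ b (T s)
  have h3 := tcb_trace_le hZ b T₀
  have h2' : ‖traceAlong b (T s * Z)‖ ≤ ε / 4 := h2.trans (by nlinarith [hT s])
  have h3' : ‖traceAlong b (T₀ * Z)‖ ≤ ε / 4 := h3.trans (by nlinarith)
  calc _ = ‖(traceAlong b (T s * F) - traceAlong b (T₀ * F)) + (traceAlong b (T s * Z)
        - traceAlong b (T₀ * Z))‖ := by congr 1; ring
    _ ≤ ‖traceAlong b (T s * F) - traceAlong b (T₀ * F)‖ + (‖traceAlong b (T s * Z)‖ +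
        ‖traceAlong b (T₀ * Z)‖) := (norm_add_le _ _).trans (by gcongr; exact norm_sub_le _ _)
    _ < ε := by linarith

end TraceLemmas

section OpLemmas

lemma op_ext (J : OperatorTensor E G) {S T : G →L[ℂ] G}
    (h : ∀ a b, S (J.tmul a b) = T (J.tmul a b)) : S = T := by
  refine ContinuousLinearMap.ext_on J.dense_span ?_
  rintro _ ⟨⟨a, b⟩, rfl⟩
  exact h a b

lemma op_add_left (J : OperatorTensor E G) (x x' y : E →L[ℂ] E) :
    J.op (x + x') y = J.op x y + J.op x' y :=
  op_ext J fun a b => by simp [J.op_tmul]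

lemma op_add_right (J : OperatorTensor E G) (x y y' : E →L[ℂ] E) :
    J.op x (y + y') = J.op x y + J.op x y' :=
  op_ext J fun a b => by simp [J.op_tmul]

lemma op_smul_left (J : OperatorTensor E G) (c : ℂ) (x y : E →L[ℂ] E) :
    J.op (c • x) y = c • J.op x y :=
  op_ext J fun a b => by simp [J.op_tmul]

lemma op_smul_right (J : OperatorTensor E G) (c : ℂ) (x y : E →L[ℂ] E) :
    J.op x (c • y) = c • J.op x y :=
  op_ext J fun a b => by simp [J.op_tmul]

lemma op_mul (J : OperatorTensor E G) (x x' y y' : E →L[ℂ] E) :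
    J.op (x * x') (y * y') = J.op x y * J.op x' y' :=
  op_ext J fun a b => by simp [J.op_tmul]

lemma op_star (J : OperatorTensor E G) (x y : E →L[ℂ] E) :
    J.op (star x) (star y) = star (J.op x y) := by
  refine op_ext J fun a b => ?_
  refine J.dense_span.eq_of_inner_left ℂ fun v hv => ?_
  induction hv using Submodule.span_induction with
  | mem v hv =>
    obtain ⟨⟨c, d⟩, rfl⟩ := hv
    simp only [J.op_tmul, ContinuousLinearMap.star_eq_adjoint,
      ContinuousLinearMap.adjoint_inner_left, J.inner_tmul]
  | zero => simp
  | add u v _ _ hu hv => rw [inner_add_right, inner_add_right, hu, hv]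
  | smul c v _ hv => rw [inner_smul_right, inner_smul_right, hv]

/-- `x ↦ x ⊗ 1` as a star homomorphism. -/
def opLeft (J : OperatorTensor E G) : (E →L[ℂ] E) →⋆ₙₐ[ℂ] (G →L[ℂ] G) where
  toFun x := J.op x 1
  map_smul' c x := op_smul_left J c x 1
  map_zero' := by simpa using op_smul_left J 0 0 1
  map_add' x y := op_add_left J x y 1
  map_mul' x y := by simpa using op_mul J x y 1 1
  map_star' x := by simpa using op_star J x 1

/-- `y ↦ 1 ⊗ y` as a star homomorphism. -/
def opRight (J : OperatorTensor E G) : (E →L[ℂ] E) →⋆ₙₐ[ℂ] (G →L[ℂ] G) where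
  toFun x := J.op 1 x
  map_smul' c x := op_smul_right J c 1 x
  map_zero' := by simpa using op_smul_right J 0 1 0
  map_add' x y := op_add_right J 1 x y
  map_mul' x y := by simpa using op_mul J 1 1 x y
  map_star' x := by simpa using op_star J 1 x

lemma op_norm_le (J : OperatorTensor E G) (x y : E →L[ℂ] E) : ‖J.op x y‖ ≤ ‖x‖ * ‖y‖ := by
  have h : J.op x y = opLeft J x * opRight J y := by
    have := op_mul J x 1 1 y
    rwa [mul_one, one_mul] at this
  rw [h]
  exact (norm_mul_le _ _).trans (mul_le_mul (NonUnitalStarAlgHom.norm_apply_le (opLeft J) x)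
    (NonUnitalStarAlgHom.norm_apply_le (opRight J) y) (norm_nonneg _) (norm_nonneg _))

lemma op_rankOne (J : OperatorTensor E G) (a b c d : E) :
    J.op (InnerProductSpace.rankOne ℂ a b) (InnerProductSpace.rankOne ℂ c d)
      = InnerProductSpace.rankOne ℂ (J.tmul a c) (J.tmul b d) :=
  op_ext J fun u v => by
    simp [J.op_tmul, J.inner_tmul, smul_smul, mul_comm]

lemma tmul_norm (J : OperatorTensor E G) (a b : E) : ‖J.tmul a b‖ = ‖a‖ * ‖b‖ := by
  have h := J.inner_tmul a b a b
  simp only [inner_self_eq_norm_sq_to_K] at h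
  have h' : ‖J.tmul a b‖ ^ 2 = (‖a‖ * ‖b‖) ^ 2 := by
    rw [mul_pow]; exact_mod_cast h
  exact (sq_eq_sq₀ (norm_nonneg _) (by positivity)).1 h'

lemma compact_rankOne (a b : E) : IsCompactOperator (InnerProductSpace.rankOne ℂ a b) := by
  rw [InnerProductSpace.rankOne_def']
  exact (isCompactOperator_of_locallyCompactSpace_dom (innerSL ℂ b)).clm_comp
    (ContinuousLinearMap.toSpanSingleton ℂ a)

lemma orthoProj_norm_le {p : E →L[ℂ] E} (hp : IsOrthoProj p) : ‖p‖ ≤ 1 := by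
  have h := CStarRing.norm_star_mul_self (x := p)
  rw [hp.2.star_eq, hp.1.eq] at h
  nlinarith [norm_nonneg p]

lemma strong_lim (J : OperatorTensor E G) {α : Type*} {l : Filter α} (S T : α → E →L[ℂ] E)
    (S₀ T₀ : E →L[ℂ] E) (hS : ∀ s, ‖S s‖ ≤ 1) (hT : ∀ s, ‖T s‖ ≤ 1) (hS₀ : ‖S₀‖ ≤ 1)
    (hT₀ : ‖T₀‖ ≤ 1)
    (hSl : ∀ x, Filter.Tendsto (fun s => S s x) l (nhds (S₀ x)))
    (hTl : ∀ x, Filter.Tendsto (fun s => T s x) l (nhds (T₀ x))) (z : G) :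
    Filter.Tendsto (fun s => J.op (S s) (T s) z) l (nhds (J.op S₀ T₀ z)) := by
  have hn : ∀ x y : E →L[ℂ] E, ‖x‖ ≤ 1 → ‖y‖ ≤ 1 → ∀ w, ‖J.op x y w‖ ≤ ‖w‖ := by
    intro x y hx hy w
    calc _ ≤ ‖J.op x y‖ * ‖w‖ := le_opNorm _ _
      _ ≤ 1 * ‖w‖ := by
        gcongr
        exact (op_norm_le J x y).trans (by nlinarith [norm_nonneg x, norm_nonneg y])
      _ = ‖w‖ := one_mul _
  have hspan : ∀ z ∈ Submodule.span ℂ (Set.range fun z : E × E => J.tmul z.1 z.2),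
      Filter.Tendsto (fun s => J.op (S s) (T s) z) l (nhds (J.op S₀ T₀ z)) := by
    intro z hz
    induction hz using Submodule.span_induction with
    | mem v hv =>
      obtain ⟨⟨a, b⟩, rfl⟩ := hv
      simp only [J.op_tmul]
      let B : E →L[ℂ] E →L[ℂ] G := J.tmul.mkContinuous₂ 1 fun a b => by
        rw [tmul_norm, one_mul]
      exact (B.continuous₂.tendsto (S₀ a, T₀ b)).comp ((hSl a).prodMk_nhds (hTl b))
    | zero => simpa using tendsto_const_nhds
    | add u v _ _ hu hv => simpa only [map_add] using hu.add hv
    | smul c v _ hv => simpa only [map_smul] using hv.const_smul c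
  rw [Metric.tendsto_nhds]
  intro ε hε
  obtain ⟨w, hw, hzw⟩ := Metric.dense_iff.1 J.dense_span z (ε / 4) (by positivity)
  filter_upwards [Metric.tendsto_nhds.1 (hspan w hzw) (ε / 4) (by positivity)] with s h1
  rw [Metric.mem_ball, dist_eq_norm] at hw
  have h2 := hn (S s) (T s) (hS s) (hT s) (w - z)
  have h3 := hn S₀ T₀ hS₀ hT₀ (w - z)
  rw [map_sub] at h2 h3
  calc dist (J.op (S s) (T s) z) (J.op S₀ T₀ z)
      ≤ dist (J.op (S s) (T s) z) (J.op (S s) (T s) w) + dist (J.op (S s) (T s) w) (J.op S₀ T₀ w)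
        + dist (J.op S₀ T₀ w) (J.op S₀ T₀ z) := dist_triangle4 _ _ _ _
    _ < ε := by
      rw [dist_comm (J.op (S s) (T s) z), dist_eq_norm (J.op (S s) (T s) w) (J.op (S s) (T s) z),
        dist_eq_norm (J.op S₀ T₀ w) (J.op S₀ T₀ z)]
      linarith

/-- Every projection is a strong orthogonal sum of rank one projections. -/
lemma proj_decomp {p : E →L[ℂ] E} (hp : IsOrthoProj p) :
    ∃ (ι : Type u) (e : ι → E), Orthonormal ℂ e ∧
      ∀ x, HasSum (fun i => InnerProductSpace.rankOne ℂ (e i) (e i) x) (p x) := by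
  let M : Submodule ℂ E := LinearMap.ker ((1 - p : E →L[ℂ] E) : E →ₗ[ℂ] E)
  have hMc : IsClosed (M : Set E) := ContinuousLinearMap.isClosed_ker (1 - p)
  have : CompleteSpace M := hMc.completeSpace_coe
  have hpM : ∀ x, p x ∈ M := fun x => by
    have := congrArg (fun T : E →L[ℂ] E => T x) hp.1.eq
    simp only [ContinuousLinearMap.mul_def, ContinuousLinearMap.comp_apply] at this
    simp [M, this]
  have hM : ∀ x ∈ M, p x = x := fun x hx => by
    simp [M, sub_eq_zero] at hx
    exact hx.symm
  obtain ⟨w, b, -⟩ := exists_hilbertBasis ℂ M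
  refine ⟨w, fun i => (b i : E), ?_, fun x => ?_⟩
  · exact b.orthonormal.comp_linearIsometry M.subtypeₗᵢ
  · have h := (b.hasSum_repr ⟨p x, hpM x⟩).mapL M.subtypeL
    refine h.congr_fun fun i => ?_
    have : ⟪(b i : E), p x⟫ = ⟪(b i : E), x⟫ := by
      have hsa := hp.2.star_eq
      rw [ContinuousLinearMap.star_eq_adjoint] at hsa
      rw [← ContinuousLinearMap.adjoint_inner_left, hsa, hM _ (b i).2]
    simp [HilbertBasis.repr_apply_apply, this]

lemma rankOne_isOrthoProj {e : E} (he : ‖e‖ = 1) :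
    IsOrthoProj (InnerProductSpace.rankOne ℂ e e) := by
  refine ⟨InnerProductSpace.isIdempotentElem_rankOne_self he, ?_⟩
  rw [ContinuousLinearMap.isSelfAdjoint_iff']
  simp

lemma rankOne_mul_orth {ι : Type*} {e : ι → E} (he : Orthonormal ℂ e) (i j : ι) (h : i ≠ j) :
    InnerProductSpace.rankOne ℂ (e i) (e i) * InnerProductSpace.rankOne ℂ (e j) (e j) = 0 := by
  rw [ContinuousLinearMap.mul_def, InnerProductSpace.rankOne_comp_rankOne, he.2 h, zero_smul]

lemma partial_norm_le {ι : Type*} {e : ι → E} (he : Orthonormal ℂ e) (s : Finset ι) :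
    ‖∑ i ∈ s, InnerProductSpace.rankOne ℂ (e i) (e i)‖ ≤ 1 := by
  have hb : Orthonormal ℂ (fun i : Fin s.card => e (s.equivFin.symm i)) :=
    he.comp _ (Subtype.val_injective.comp s.equivFin.symm.injective)
  have := partial_isom_norm_le _ _ hb hb (fun _ => 1) (by simp)
  rw [← Finset.sum_coe_sort, ← s.equivFin.symm.sum_comp]
  simpa using this

/-- Normality of `T ↦ tr ((x ⊗ q) X)` along a decomposition into rank one projections. -/
lemma op_sum_left (J : OperatorTensor E G) {ι : Type*} (s : Finset ι) (f : ι → E →L[ℂ] E)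
    (y : E →L[ℂ] E) : J.op (∑ i ∈ s, f i) y = ∑ i ∈ s, J.op (f i) y :=
  op_ext J fun a b => by simp [J.op_tmul]

lemma op_sum_right (J : OperatorTensor E G) {ι : Type*} (s : Finset ι) (f : ι → E →L[ℂ] E)
    (y : E →L[ℂ] E) : J.op y (∑ i ∈ s, f i) = ∑ i ∈ s, J.op y (f i) :=
  op_ext J fun a b => by simp [J.op_tmul]

/-- The trace functional `T ↦ tr (T X)`. -/
def trFun {κ : Type*} (b : HilbertBasis κ ℂ G) {C : ℝ} {X : G →L[ℂ] G} (hX : TCB C X) :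
    (G →L[ℂ] G) →ₗ[ℂ] ℂ where
  toFun T := traceAlong b (T * X)
  map_add' S T := by
    simp only [traceAlong, add_mul, add_apply, inner_add_right]
    exact (tcb_summable hX b S).tsum_add (tcb_summable hX b T)
  map_smul' c T := by
    simp only [traceAlong, smul_mul_assoc, smul_apply, inner_smul_right,
      RingHom.id_apply, smul_eq_mul]
    exact tsum_mul_left

lemma trFun_hasSum_left (J : OperatorTensor E G) {κ : Type*} (b : HilbertBasis κ ℂ G) {C : ℝ}
    {X : G →L[ℂ] G} (hX : TCB C X) {p q : E →L[ℂ] E} (hp : ‖p‖ ≤ 1) (hq : ‖q‖ ≤ 1)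
    {ι : Type*} {e : ι → E} (he : Orthonormal ℂ e)
    (hs : ∀ x, HasSum (fun i => InnerProductSpace.rankOne ℂ (e i) (e i) x) (p x)) :
    HasSum (fun i => trFun b hX (J.op (InnerProductSpace.rankOne ℂ (e i) (e i)) q))
      (trFun b hX (J.op p q)) := by
  have h := trace_normal hX b (l := Filter.atTop)
    (fun s : Finset ι => J.op (∑ i ∈ s, InnerProductSpace.rankOne ℂ (e i) (e i)) q) (J.op p q)
    (fun s => (op_norm_le J _ _).trans
      (mul_le_one₀ (partial_norm_le he s) (norm_nonneg _) hq))
    ((op_norm_le J _ _).trans (mul_le_one₀ hp (norm_nonneg _) hq))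
    (fun z => strong_lim J _ (fun _ => q) p q (partial_norm_le he) (fun _ => hq) hp hq
      (fun x => by simpa [HasSum] using hs x) (fun x => tendsto_const_nhds) z)
  unfold HasSum
  refine Filter.Tendsto.congr (fun s => ?_) h
  rw [← map_sum, ← op_sum_left]
  rfl

lemma trFun_hasSum_right (J : OperatorTensor E G) {κ : Type*} (b : HilbertBasis κ ℂ G) {C : ℝ}
    {X : G →L[ℂ] G} (hX : TCB C X) {p q : E →L[ℂ] E} (hp : ‖p‖ ≤ 1) (hq : ‖q‖ ≤ 1)
    {ι : Type*} {e : ι → E} (he : Orthonormal ℂ e)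
    (hs : ∀ x, HasSum (fun i => InnerProductSpace.rankOne ℂ (e i) (e i) x) (q x)) :
    HasSum (fun i => trFun b hX (J.op p (InnerProductSpace.rankOne ℂ (e i) (e i))))
      (trFun b hX (J.op p q)) := by
  have h := trace_normal hX b (l := Filter.atTop)
    (fun s : Finset ι => J.op p (∑ i ∈ s, InnerProductSpace.rankOne ℂ (e i) (e i))) (J.op p q)
    (fun s => (op_norm_le J _ _).trans
      (mul_le_one₀ hp (norm_nonneg _) (partial_norm_le he s)))
    ((op_norm_le J _ _).trans (mul_le_one₀ hp (norm_nonneg _) hq))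
    (fun z => strong_lim J (fun _ => p) _ p q (fun _ => hp) (partial_norm_le he) hp hq
      (fun x => tendsto_const_nhds) (fun x => by simpa [HasSum] using hs x) z)
  unfold HasSum
  refine Filter.Tendsto.congr (fun s => ?_) h
  rw [← map_sum, ← op_sum_right]
  rfl

/-- Every bounded functional on `B(H)` is given on rank one operators by a trace class
operator. -/
lemma exists_density (φ : (G →L[ℂ] G) →L[ℂ] ℂ) :
    ∃ X : G →L[ℂ] G, TCB ‖φ‖ X ∧
      ∀ η ξ, ⟪ξ, X η⟫ = φ (InnerProductSpace.rankOne ℂ η ξ) := by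
  let B : G →L⋆[ℂ] G →L[ℂ] ℂ := LinearMap.mkContinuous₂
    (LinearMap.mk₂'ₛₗ (starRingEnd ℂ) (RingHom.id ℂ)
      (fun ξ η => φ (InnerProductSpace.rankOne ℂ η ξ))
      (by intros; simp) (by intros; simp) (by intros; simp) (by intros; simp)) ‖φ‖ (by
        intro ξ η
        refine (φ.le_opNorm _).trans ?_
        rw [InnerProductSpace.norm_rankOne]
        exact le_of_eq (by ring))
  have hX : ∀ η ξ, ⟪ξ, adjoint (InnerProductSpace.continuousLinearMapOfBilin B) η⟫
      = φ (InnerProductSpace.rankOne ℂ η ξ) := by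
    intro η ξ
    rw [ContinuousLinearMap.adjoint_inner_right,
      InnerProductSpace.continuousLinearMapOfBilin_apply]
    rfl
  refine ⟨adjoint (InnerProductSpace.continuousLinearMapOfBilin B), ?_, hX⟩
  intro n e f he hf
  simp only [hX]
  choose θ hθ hθ' using fun i => exists_phase (φ (InnerProductSpace.rankOne ℂ (f i) (e i)))
  have h1 := partial_isom_norm_le e f he hf θ hθ
  have h2 := φ.le_opNorm (∑ i, θ i • InnerProductSpace.rankOne ℂ (f i) (e i))
  simp only [map_sum, map_smul, smul_eq_mul, hθ'] at h2
  rw [← Complex.ofReal_sum, Complex.norm_of_nonneg (Finset.sum_nonneg fun _ _ => norm_nonneg _)]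
    at h2
  exact h2.trans (mul_le_of_le_one_right (norm_nonneg _) h1)

end OpLemmas

/-- A completely additive decoherence functional `d` on a Hilbert
space of dimension `≠ 2` is representable as `d(p,q) = tr((p ⊗ q) 𝔛)` for ALL
projections `p, q`, with `𝔛` trace class on `𝔥 ⊗ 𝔥`, iff `d` is tensor
bounded. -/
theorem stmt_3 (hdim : Module.rank ℂ E ≠ 2)
    (d : (E →L[ℂ] E) → (E →L[ℂ] E) → ℂ)
    (hd : IsDecoherenceFunctional d) (hca : DFCompletelyAdditive d)
    (J : OperatorTensor E G) {ι : Type u} (bG : HilbertBasis ι ℂ G) :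
    (∃ X : G →L[ℂ] G, IsTraceClass X ∧
        ∀ p q : E →L[ℂ] E, IsOrthoProj p → IsOrthoProj q →
          d p q = traceAlong bG (J.op p q * X)) ↔ IsTensorBounded J d := by
  constructor
  · rintro ⟨X, ⟨C, hX⟩, hd'⟩
    have hX : TCB C X := hX
    have hC : 0 ≤ C := by simpa using hX 0 ![] ![] (by simp [Orthonormal]) (by simp [Orthonormal])
    have hb : ∀ T, ‖trFun bG hX T‖ ≤ 2 * C * ‖T‖ := tcb_trace_le hX bG
    refine ⟨LinearMap.mk₂ ℂ (fun x y => trFun bG hX (J.op x y))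
      (fun x x' y => by rw [op_add_left, map_add]) (fun c x y => by rw [op_smul_left, map_smul])
      (fun x x' y => by rw [op_add_right, map_add]) (fun c x y => by rw [op_smul_right, map_smul]),
      ⟨2 * C, fun x y => ?_⟩, fun p q hp hq => (hd' p q hp hq).symm,
      (trFun bG hX).comp J.compactSpan.subtype, fun x y _ _ _ => rfl, ⟨2 * C, fun S => hb _⟩⟩
    rw [mul_assoc]
    exact (hb _).trans (mul_le_mul_of_nonneg_left (op_norm_le J x y) (by positivity))
  · rintro ⟨D, -, hDd, β, hβ, C, hC⟩
    obtain ⟨φ, hφ, -⟩ := exists_extension_norm_eq J.compactSpan (β.mkContinuous C hC)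
    obtain ⟨X, hXb, hX⟩ := exists_density φ
    have h1 : ∀ e f : E, ‖e‖ = 1 → ‖f‖ = 1 →
        d (InnerProductSpace.rankOne ℂ e e) (InnerProductSpace.rankOne ℂ f f)
          = trFun bG hXb (J.op (InnerProductSpace.rankOne ℂ e e)
            (InnerProductSpace.rankOne ℂ f f)) := by
      intro e f he hf
      have hm : J.op (InnerProductSpace.rankOne ℂ e e) (InnerProductSpace.rankOne ℂ f f)
          ∈ J.compactSpan :=
        Submodule.subset_span ⟨_, _, compact_rankOne e e, compact_rankOne f f, rfl⟩
      have h2 : trFun bG hXb (J.op (InnerProductSpace.rankOne ℂ e e)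
            (InnerProductSpace.rankOne ℂ f f)) = ⟪J.tmul e f, X (J.tmul e f)⟫ := by
        rw [op_rankOne]
        exact (trace_rankOne_mul bG X _ _).tsum_eq
      rw [h2, hX, ← op_rankOne, ← hDd _ _ (rankOne_isOrthoProj he) (rankOne_isOrthoProj hf),
        ← hβ _ _ (compact_rankOne e e) (compact_rankOne f f) hm]
      exact (hφ ⟨_, hm⟩).symm
    refine ⟨X, ⟨_, hXb⟩, fun p q hp hq => ?_⟩
    change d p q = trFun bG hXb (J.op p q)
    have h2 : ∀ e : E, ‖e‖ = 1 → ∀ q, IsOrthoProj q →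
        d (InnerProductSpace.rankOne ℂ e e) q
          = trFun bG hXb (J.op (InnerProductSpace.rankOne ℂ e e) q) := by
      intro e he q hq
      have hep := rankOne_isOrthoProj he
      obtain ⟨ι', f, hf, hfs⟩ := proj_decomp hq
      have h3 := hca ι' (fun i => InnerProductSpace.rankOne ℂ (f i) (f i)) q
        (InnerProductSpace.rankOne ℂ e e) (fun i => rankOne_isOrthoProj (hf.1 i)) hq hep
        (rankOne_mul_orth hf) hfs
      have h4 := h3.map (starRingEnd ℂ) Complex.continuous_conj
      rw [← hd.hermitian _ _ hep hq] at h4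
      refine h4.unique ?_
      refine (trFun_hasSum_right J bG hXb (orthoProj_norm_le hep) (orthoProj_norm_le hq) hf
        hfs).congr_fun fun i => ?_
      rw [← h1 e (f i) he (hf.1 i),
        hd.hermitian _ _ hep (rankOne_isOrthoProj (hf.1 i))]
      rfl
    obtain ⟨ι', e, he, hes⟩ := proj_decomp hp
    have h3 := hca ι' (fun i => InnerProductSpace.rankOne ℂ (e i) (e i)) p q
      (fun i => rankOne_isOrthoProj (he.1 i)) hp hq (rankOne_mul_orth he) hes
    refine h3.unique ?_
    refine (trFun_hasSum_left J bG hXb (orthoProj_norm_le hp) (orthoProj_norm_le hq) he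
      hes).congr_fun fun i => ?_
    exact h2 (e i) (he.1 i) q hq
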